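/- arXiv:1402.0799 — 3 statements merged into one kernel-verified Lean document; each statement's English description precedes it below -/
import Mathlib

section
/- Let G be a group, S a generating n-tuple of G, and H a subgroup of G with n ≤ [G:H] (allowing the possibility that H has infinite index in G). Then there is a generating n-tuple S' of G, Nielsen equivalent to S, and a left transversal T for H in G such that every entry of S' belongs to T. -/
/-- A single Nielsen move on an `n`-tuple of elements of `G`. -/
def IsNielsenMove {G : Type*} [Group G] {n : ℕ} (S S' : Fin n → G) : Prop :=
  (∃ i j, i ≠ j ∧
    (S' = Function.update S i (S j * S i) ∨ S' = Function.update S i ((S j)⁻¹ * S i) ∨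
     S' = Function.update S i (S i * S j) ∨ S' = Function.update S i (S i * (S j)⁻¹))) ∨
  (∃ i, S' = Function.update S i (S i)⁻¹) ∨
  (∃ i j, i ≠ j ∧ S' = S ∘ Equiv.swap i j)

/-- Two `n`-tuples are Nielsen equivalent if they differ by a finite sequence of Nielsen
moves. -/
def NielsenEquiv {G : Type*} [Group G] {n : ℕ} (S S' : Fin n → G) : Prop :=
  Relation.ReflTransGen IsNielsenMove S S'

/-- A left transversal for `H` in `G`: a set containing exactly one element of each left
coset of `H`. -/
def IsLeftTransversal {G : Type*} [Group G] (H : Subgroup G) (T : Set G) : Prop :=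
  ∀ g : G, ∃! t, t ∈ T ∧ g⁻¹ * t ∈ H

/-!
Let `G` act on `X`, let `x : X`, and choose within the Nielsen class of `S` a tuple whose set of
values `A = {S k • x}` is as large as possible. Suppose that `S i • x = S j • x` with `i ≠ j`.
Then the `i`-th entry is not needed to attain any value in `A`, so by maximality no sequence of
Nielsen moves on it can produce a value outside `A`. For `l ≠ i`, the replacements

* `S i ↦ S i * S l`, with value `S i • S l • x`, and
* `S i ↦ S k * S l * (S j)⁻¹ * S i` for `k ≠ i`, with value `S k • S l • x`,

show that every entry of `S` maps `A` into itself. Hence the finite set `A` contains the orbit of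
`x` under the generated subgroup, although `A` has fewer than `n` elements. So if that orbit has at
least `n` elements, then the `S k • x` are distinct. Take `X = G ⧸ H` and `x = H`.
-/

open Function MulAction
open scoped Pointwise Cardinal

theorem exists_ne_apply_eq_of_mem_range {ι α : Type*} {f : ι → α} {i j : ι} (hij : i ≠ j)
    (h : f i = f j) {a : α} (ha : a ∈ Set.range f) : ∃ l ≠ i, f l = a := by
  obtain ⟨l, rfl⟩ := ha
  obtain rfl | hl := eq_or_ne l i
  · exact ⟨j, hij.symm, h.symm⟩
  · exact ⟨l, hl, rfl⟩

theorem insert_range_subset_range_update {ι α : Type*} [DecidableEq ι] {f : ι → α} {i j : ι}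
    (hij : i ≠ j) (h : f i = f j) (a : α) : insert a (Set.range f) ⊆ Set.range (update f i a) := by
  rintro b (rfl | hb)
  · exact ⟨i, update_self ..⟩
  · obtain ⟨l, hl, rfl⟩ := exists_ne_apply_eq_of_mem_range hij h hb
    exact ⟨l, update_of_ne hl ..⟩

section NielsenMoves

variable {G : Type*} [Group G] {n : ℕ} {S S' : Fin n → G}

theorem IsNielsenMove.symm (h : IsNielsenMove S S') : IsNielsenMove S' S := by
  rcases h with ⟨i, j, hij, h⟩ | ⟨i, rfl⟩ | ⟨i, j, hij, rfl⟩
  · refine Or.inl ⟨i, j, hij, ?_⟩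
    rcases h with rfl | rfl | rfl | rfl <;> simp [update_of_ne hij.symm]
  · exact Or.inr (Or.inl ⟨i, by simp⟩)
  · exact Or.inr (Or.inr ⟨i, j, hij, by ext; simp⟩)

theorem IsNielsenMove.mem_closure_range (h : IsNielsenMove S S') (k : Fin n) :
    S' k ∈ Subgroup.closure (Set.range S) := by
  have hS (l : Fin n) : S l ∈ Subgroup.closure (Set.range S) :=
    Subgroup.subset_closure (Set.mem_range_self l)
  have hupdate {i : Fin n} {g : G} (hg : g ∈ Subgroup.closure (Set.range S)) :
      update S i g k ∈ Subgroup.closure (Set.range S) := by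
    obtain rfl | hk := eq_or_ne k i
    · rwa [update_self]
    · rw [update_of_ne hk]
      exact hS k
  rcases h with ⟨i, j, -, rfl | rfl | rfl | rfl⟩ | ⟨i, rfl⟩ | ⟨i, j, -, rfl⟩
  · exact hupdate (mul_mem (hS j) (hS i))
  · exact hupdate (mul_mem (inv_mem (hS j)) (hS i))
  · exact hupdate (mul_mem (hS i) (hS j))
  · exact hupdate (mul_mem (hS i) (inv_mem (hS j)))
  · exact hupdate (inv_mem (hS i))
  · exact hS _

theorem IsNielsenMove.closure_range_le (h : IsNielsenMove S S') :
    Subgroup.closure (Set.range S') ≤ Subgroup.closure (Set.range S) :=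
  (Subgroup.closure_le _).2 (Set.range_subset_iff.2 h.mem_closure_range)

theorem NielsenEquiv.closure_range_eq (h : NielsenEquiv S S') :
    Subgroup.closure (Set.range S') = Subgroup.closure (Set.range S) := by
  induction h with
  | refl => rfl
  | tail _ hmove ih => exact (hmove.closure_range_le.antisymm hmove.symm.closure_range_le).trans ih

theorem IsNielsenMove.update_mul_left {i j : Fin n} (hij : i ≠ j) (g : G) :
    IsNielsenMove (update S i g) (update S i (S j * g)) :=
  Or.inl ⟨i, j, hij, Or.inl (by simp [update_of_ne hij.symm])⟩

theorem NielsenEquiv.update_mul_right {i j : Fin n} (hij : i ≠ j) :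
    NielsenEquiv S (update S i (S i * S j)) :=
  .single (Or.inl ⟨i, j, hij, Or.inr (Or.inr (Or.inl rfl))⟩)

theorem NielsenEquiv.update_mul_mul_inv_mul {i j k l : Fin n} (hj : i ≠ j) (hk : i ≠ k)
    (hl : i ≠ l) : NielsenEquiv S (update S i (S k * (S l * ((S j)⁻¹ * S i)))) := by
  have hmove : IsNielsenMove S (update S i ((S j)⁻¹ * S i)) :=
    Or.inl ⟨i, j, hj, Or.inr (Or.inl rfl)⟩
  exact ((Relation.ReflTransGen.single hmove).tail (.update_mul_left hl _)).tail
    (.update_mul_left hk _)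

end NielsenMoves

section Action

variable {G X : Type*} [Group G] [MulAction G X] {n : ℕ} {S : Fin n → G} {x : X}

/-- `S` is Nielsen-maximal at `x` if no tuple reachable from `S` by Nielsen moves carries `x` to
more distinct points than `S` does. The number of points is at most `n`, so `Set.ncard` counts
them faithfully. -/
def IsNielsenMaximal (S : Fin n → G) (x : X) : Prop :=
  ∀ S', NielsenEquiv S S' → (Set.range (S' · • x)).ncard ≤ (Set.range (S · • x)).ncard

theorem exists_nielsenEquiv_isNielsenMaximal (S : Fin n → G) (x : X) :
    ∃ S', NielsenEquiv S S' ∧ IsNielsenMaximal S' x := by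
  let count (S' : Fin n → G) : ℕ := (Set.range (S' · • x)).ncard
  have hcount (S' : Fin n → G) : count S' ≤ n := by
    simpa using Finite.card_range_le (S' · • x)
  have hfinite : (count '' {S' | NielsenEquiv S S'}).Finite :=
    (Set.finite_Iic n).subset (Set.image_subset_iff.2 fun S' _ ↦ hcount S')
  obtain ⟨S', hS', hmax⟩ :=
    Set.Finite.exists_maximalFor' count _ hfinite ⟨S, Relation.ReflTransGen.refl⟩
  exact ⟨S', hS', fun S'' h ↦ le_of_not_gt fun hlt ↦
    hlt.not_ge (hmax (Relation.ReflTransGen.trans hS' h) hlt.le)⟩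

namespace IsNielsenMaximal

theorem smul_mem_range (hmax : IsNielsenMaximal S x) {i j : Fin n} (hij : i ≠ j)
    (h : S i • x = S j • x) {g : G} (hg : NielsenEquiv S (update S i g)) :
    g • x ∈ Set.range (S · • x) := by
  by_contra hgx
  have hupdate : (update S i g · • x) = update (S · • x) i (g • x) :=
    comp_update (· • x) S i g
  have hsubset : insert (g • x) (Set.range (S · • x)) ⊆ Set.range (update S i g · • x) :=
    hupdate ▸ insert_range_subset_range_update hij h (g • x)
  have hlt := Set.ncard_lt_ncard
    ((Set.ssubset_insert hgx).trans_subset hsubset) (Set.finite_range _)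
  exact hlt.not_ge (hmax _ hg)

theorem closure_le_stabilizer (hmax : IsNielsenMaximal S x) {i j : Fin n} (hij : i ≠ j)
    (h : S i • x = S j • x) :
    Subgroup.closure (Set.range S) ≤ stabilizer G (Set.range (S · • x)) := by
  rw [Subgroup.closure_le, Set.range_subset_iff]
  intro k
  rw [SetLike.mem_coe, mem_stabilizer_set_iff_smul_set_subset (Set.finite_range _)]
  rintro _ ⟨_, ha, rfl⟩
  obtain ⟨l, hl, rfl⟩ := exists_ne_apply_eq_of_mem_range hij h ha
  obtain rfl | hk := eq_or_ne k i
  · simpa only [mul_smul] using hmax.smul_mem_range hij h (.update_mul_right hl.symm)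
  · simpa only [mul_smul, h, inv_smul_smul] using
      hmax.smul_mem_range hij h (.update_mul_mul_inv_mul hij hk.symm hl.symm)

theorem image_smul_closure_subset_range (hmax : IsNielsenMaximal S x) {i j : Fin n} (hij : i ≠ j)
    (h : S i • x = S j • x) :
    (· • x) '' (Subgroup.closure (Set.range S) : Set G) ⊆ Set.range (S · • x) := by
  have hstab := hmax.closure_le_stabilizer hij h
  have hx : x ∈ Set.range (S · • x) := by
    have hi : (S i)⁻¹ ∈ stabilizer G (Set.range (S · • x)) :=
      inv_mem (hstab (Subgroup.subset_closure (Set.mem_range_self i)))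
    simpa using (mem_stabilizer_set.1 hi (S i • x)).2 (Set.mem_range_self i)
  rintro _ ⟨g, hg, rfl⟩
  exact (mem_stabilizer_set.1 (hstab hg) x).2 hx

theorem injective_smul (hmax : IsNielsenMaximal S x)
    (hn : (n : Cardinal) ≤ #((· • x) '' (Subgroup.closure (Set.range S) : Set G))) :
    Injective (S · • x) := by
  intro i j h
  by_contra hij
  have hle : (n : Cardinal) ≤ #(Set.range (S · • x)) :=
    hn.trans (Cardinal.mk_le_mk_of_subset (hmax.image_smul_closure_subset_range hij h))
  rw [← Nat.cast_card, Nat.cast_le] at hle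
  have hbij : Bijective (Set.rangeFactorization (S · • x)) :=
    Set.rangeFactorization_surjective.bijective_of_nat_card_le (by simpa using hle)
  exact hij (Set.rangeFactorization_bijective.1 hbij h)

end IsNielsenMaximal

theorem exists_nielsenEquiv_injective_smul (S : Fin n → G) (x : X)
    (hn : (n : Cardinal) ≤ #((· • x) '' (Subgroup.closure (Set.range S) : Set G))) :
    ∃ S', NielsenEquiv S S' ∧ Injective (S' · • x) := by
  obtain ⟨S', hS', hmax⟩ := exists_nielsenEquiv_isNielsenMaximal S x
  exact ⟨S', hS', hmax.injective_smul (hS'.closure_range_eq ▸ hn)⟩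

end Action

section Transversal

variable {G : Type*} [Group G] {H : Subgroup G}

theorem isLeftTransversal_of_bijOn {T : Set G}
    (hT : Set.BijOn (QuotientGroup.mk : G → G ⧸ H) T Set.univ) : IsLeftTransversal H T := by
  intro g
  obtain ⟨t, ht, htg⟩ := hT.surjOn (Set.mem_univ (g : G ⧸ H))
  refine ⟨t, ⟨ht, QuotientGroup.eq.1 htg.symm⟩, fun t' ⟨ht', hgt'⟩ ↦ hT.injOn ht' ht ?_⟩
  exact (QuotientGroup.eq.2 hgt').symm.trans htg.symm

theorem exists_isLeftTransversal_superset {A : Set G}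
    (hA : A.InjOn (QuotientGroup.mk : G → G ⧸ H)) : ∃ T, A ⊆ T ∧ IsLeftTransversal H T := by
  obtain ⟨T, hAT, hT⟩ := hA.bijOn_image.exists_extend (Set.subset_univ _)
    QuotientGroup.mk_surjective.range_eq.ge
  exact ⟨T, hAT, isLeftTransversal_of_bijOn hT⟩

end Transversal

theorem stmt_6_general {G : Type*} [Group G] (H : Subgroup G) {n : ℕ} (S : Fin n → G)
    (hn : (n : Cardinal) ≤
      #((QuotientGroup.mk : G → G ⧸ H) '' (Subgroup.closure (Set.range S) : Set G))) :
    ∃ (S' : Fin n → G) (T : Set G), NielsenEquiv S S' ∧ Injective S' ∧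
      IsLeftTransversal H T ∧ ∀ i, S' i ∈ T := by
  have hsmul : (fun g : G ↦ g • ((1 : G) : G ⧸ H)) = QuotientGroup.mk := by
    ext g
    rw [MulAction.Quotient.smul_coe, smul_eq_mul, mul_one]
  obtain ⟨S', hS', hinj⟩ :=
    exists_nielsenEquiv_injective_smul S ((1 : G) : G ⧸ H) (by rwa [hsmul])
  have hmk : Injective (QuotientGroup.mk ∘ S' : Fin n → G ⧸ H) := hsmul ▸ hinj
  obtain ⟨T, hS'T, hT⟩ := exists_isLeftTransversal_superset hmk.injOn_range
  exact ⟨S', T, hS', hmk.of_comp, hT, fun i ↦ hS'T (Set.mem_range_self i)⟩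

/-- If `S` is a generating `n`-tuple of `G` and `H` is a subgroup with `n ≤ [G:H]`
(possibly `[G:H] = ∞`), then there is a Nielsen-equivalent generating `n`-tuple `S'` and a
left transversal `T` for `H` in `G` containing every entry of `S'`. -/
theorem stmt_6 {G : Type*} [Group G] (H : Subgroup G) {n : ℕ} (S : Fin n → G)
    (hS : Subgroup.closure (Set.range S) = ⊤)
    (hindex : (n : Cardinal) ≤ Cardinal.mk (G ⧸ H)) :
    ∃ (S' : Fin n → G) (T : Set G), NielsenEquiv S S' ∧
      Subgroup.closure (Set.range S') = ⊤ ∧ IsLeftTransversal H T ∧ ∀ i, S' i ∈ T := by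
  obtain ⟨S', T, hS', -, hT, hmem⟩ := stmt_6_general H S <| by
    rwa [hS, Subgroup.coe_top, Set.image_univ_of_surjective QuotientGroup.mk_surjective,
      Cardinal.mk_univ]
  exact ⟨S', T, hS', hS'.closure_range_eq.trans hS, hT, hmem⟩
end

section
/- Let G be a finitely generated group and H a subgroup of finite index in G. Then the following are equivalent: (1) there exists a left transversal T for H in G with ⟨T⟩ = G; (2) [G:H] ≥ d(G). -/
/-!
If a finite generating set `S` of `G` has two elements `s ≠ t` in the same coset of `H`, then
replacing `s` by `a * s * b`, with `a` and `b` in the subgroup `K` generated by `S \ {s}`, again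
gives a generating set, and no coset met by `S` is lost. If no such replacement met a new coset,
then the finite set of cosets met by `S` would be `KH / H` and stable under both `K` and `s`, hence
under `G`; by transitivity `S` would meet every coset. As long as there are at least as many
cosets as elements of `S`, one can therefore make `S` meet more cosets until its elements lie in
distinct ones, and then extend it to a transversal.
-/

open Set Subgroup
open scoped Pointwise

theorem image_sdiff_singleton_of_mem_image {α β : Type*} {f : α → β} {s : Set α} {a : α}
    (h : f a ∈ f '' (s \ {a})) : f '' (s \ {a}) = f '' s := by
  refine (image_mono sdiff_subset).antisymm ?_
  rintro _ ⟨b, hb, rfl⟩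
  by_cases hba : b = a
  · rwa [hba]
  · exact mem_image_of_mem f ⟨hb, hba⟩

section Group

variable {G : Type*} [Group G]

theorem closure_insert_mul_mul {S : Set G} {a b : G} (ha : a ∈ closure S) (hb : b ∈ closure S)
    (g : G) : closure (insert (a * g * b) S) = closure (insert g S) := by
  have mem_of_mem {c x : G} (hc : c ∈ closure S) : c ∈ closure (insert x S) :=
    closure_mono (subset_insert x S) hc
  have self_mem (x : G) : x ∈ closure (insert x S) := subset_closure (mem_insert x S)
  refine le_antisymm ((closure_le _).2 (insert_subset ?_ fun _ hs ↦ mem_of_mem (subset_closure hs)))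
    ((closure_le _).2 (insert_subset ?_ fun _ hs ↦ mem_of_mem (subset_closure hs)))
  · exact mul_mem (mul_mem (mem_of_mem ha) (self_mem g)) (mem_of_mem hb)
  · exact (mul_mem_cancel_left (mem_of_mem ha)).1 <|
      (mul_mem_cancel_right (mem_of_mem hb)).1 (self_mem (a * g * b))

section Action

variable {X : Type*} [MulAction G X] [MulAction.IsPretransitive G X]

theorem eq_univ_of_forall_smul_subset_of_closure_eq_top {S : Set G} (hS : closure S = ⊤)
    {C : Set X} (hfin : C.Finite) (hne : C.Nonempty) (hC : ∀ g ∈ S, g • C ⊆ C) : C = univ := by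
  have hstab : MulAction.stabilizer G C = ⊤ := top_le_iff.1 <| hS ▸ (closure_le _).2 fun g hg ↦
    (MulAction.mem_stabilizer_set_iff_smul_set_subset hfin).2 (hC g hg)
  obtain ⟨c, hc⟩ := hne
  refine eq_univ_of_forall fun x ↦ ?_
  obtain ⟨g, rfl⟩ := MulAction.exists_smul_eq G c x
  exact (MulAction.mem_stabilizer_set.1 (hstab ▸ mem_top g) c).2 hc

theorem exists_mul_mul_smul_notMem {S : Set G} {g : G} (hS : closure (insert g S) = ⊤) {x : X}
    {R : Set X} (hfin : R.Finite) (hR : R ≠ univ) (hRS : R ⊆ (· • x) '' (closure S : Set G))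
    (hg : g • x ∈ (· • x) '' (closure S : Set G)) :
    ∃ a ∈ closure S, ∃ b ∈ closure S, (a * g * b) • x ∉ R := by
  by_contra! hmem
  obtain ⟨c, hc, hcg : c • x = g • x⟩ := hg
  have hSR : ∀ k ∈ closure S, k • x ∈ R := fun k hk ↦ by
    have := hmem (k * c⁻¹) (mul_mem hk (inv_mem hc)) 1 (one_mem _)
    rwa [mul_one, mul_smul, ← hcg, smul_smul, inv_mul_cancel_right] at this
  refine hR (eq_univ_of_forall_smul_subset_of_closure_eq_top hS hfin ⟨_, hSR 1 (one_mem _)⟩ ?_)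
  rintro h hh _ ⟨r, hr, rfl⟩
  obtain ⟨k, hk, rfl⟩ := hRS hr
  simp only [smul_smul]
  rcases hh with rfl | hh
  · simpa only [one_mul] using hmem 1 (one_mem _) k hk
  · exact hSR _ (mul_mem (subset_closure hh) hk)

theorem exists_closure_insert_sdiff_eq_top_smul_notMem {S : Set G} (hS : closure S = ⊤)
    (hfin : S.Finite) {x : X} (huniv : (· • x) '' S ≠ univ) {s : G} (hs : s ∈ S)
    (hsx : s • x ∈ (· • x) '' (S \ {s})) :
    ∃ g : G, closure (insert g (S \ {s})) = ⊤ ∧ g • x ∉ (· • x) '' S := by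
  have hins : closure (insert s (S \ {s})) = ⊤ := by rwa [insert_sdiff_self_of_mem hs]
  have hsub : (· • x) '' (S \ {s}) ⊆ (· • x) '' (closure (S \ {s}) : Set G) :=
    image_mono subset_closure
  obtain ⟨a, ha, b, hb, hab⟩ := exists_mul_mul_smul_notMem hins (hfin.image _) huniv
    ((image_sdiff_singleton_of_mem_image hsx).symm.trans_subset hsub) (hsub hsx)
  exact ⟨a * s * b, (closure_insert_mul_mul ha hb s).trans hins, hab⟩

theorem exists_closure_eq_top_injOn_smul {S : Set G} (hS : closure S = ⊤) (hfin : S.Finite)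
    (hcard : S.encard ≤ ENat.card X) (x : X) :
    ∃ T : Set G, closure T = ⊤ ∧ InjOn (· • x) T := by
  induction hn : S.ncard - ((· • x) '' S).ncard using Nat.strong_induction_on generalizing S with
  | _ n ih =>
    subst hn
    by_cases hinj : InjOn (· • x) S
    · exact ⟨S, hS, hinj⟩
    have huniv : (· • x) '' S ≠ univ := fun h ↦ hinj <| hfin.injOn_of_encard_image_eq <|
      (encard_image_le _ _).antisymm (by rwa [h, encard_univ])
    obtain ⟨s, hs, t, ht, hst, hne⟩ : ∃ s ∈ S, ∃ t ∈ S, s • x = t • x ∧ s ≠ t := by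
      simpa only [InjOn, not_forall, exists_prop] using hinj
    have hsx : s • x ∈ (· • x) '' (S \ {s}) := ⟨t, ⟨ht, hne.symm⟩, hst.symm⟩
    obtain ⟨g, hg, hgx⟩ := exists_closure_insert_sdiff_eq_top_smul_notMem hS hfin huniv hs hsx
    have hgS : g ∉ S := fun h ↦ hgx (mem_image_of_mem _ h)
    have himage : ((· • x) '' insert g (S \ {s})).ncard = ((· • x) '' S).ncard + 1 := by
      rw [image_insert_eq, image_sdiff_singleton_of_mem_image hsx,
        ncard_insert_of_notMem hgx (hfin.image _)]
    have hlt : ((· • x) '' S).ncard < S.ncard :=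
      (ncard_image_le hfin).lt_of_ne fun h ↦ hinj (injOn_of_ncard_image_eq h hfin)
    refine ih _ ?_ hg (hfin.sdiff.insert g) ((encard_exchange hgS hs).trans_le hcard) rfl
    rw [himage, ncard_exchange hgS hs]
    lia

end Action

theorem isLeftTransversal_iff_bijOn {H : Subgroup G} {T : Set G} :
    IsLeftTransversal H T ↔ BijOn ((↑) : G → G ⧸ H) T univ := by
  simp only [IsLeftTransversal, ← QuotientGroup.eq]
  refine ⟨fun h ↦ ⟨mapsTo_univ _ _, fun s hs t ht hst ↦ ?_, fun q _ ↦ ?_⟩, fun h g ↦ ?_⟩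
  · exact (h s).unique ⟨hs, rfl⟩ ⟨ht, hst⟩
  · obtain ⟨g, rfl⟩ := QuotientGroup.mk_surjective q
    obtain ⟨t, ⟨ht, hgt⟩, -⟩ := h g
    exact ⟨t, ht, hgt.symm⟩
  · obtain ⟨t, ht, htg⟩ := h.surjOn (mem_univ (g : G ⧸ H))
    exact ⟨t, ⟨ht, htg.symm⟩, fun u ⟨hu, hgu⟩ ↦ h.injOn hu ht (hgu.symm.trans htg.symm)⟩

theorem IsLeftTransversal.encard_eq {H : Subgroup G} {T : Set G} (hT : IsLeftTransversal H T) :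
    T.encard = ENat.card (G ⧸ H) := by
  have hbij := isLeftTransversal_iff_bijOn.1 hT
  rw [← hbij.injOn.encard_image, hbij.image_eq, encard_univ]

theorem exists_isLeftTransversal_superset_s7 {H : Subgroup G} {S : Set G}
    (hS : InjOn ((↑) : G → G ⧸ H) S) : ∃ T, S ⊆ T ∧ IsLeftTransversal H T := by
  simp only [isLeftTransversal_iff_bijOn]
  exact hS.bijOn_image.exists_extend (subset_univ _) QuotientGroup.mk_surjective.range_eq.ge

variable [Group.FG G]

theorem rank_le_encard_of_closure_eq_top {S : Set G} (hS : closure S = ⊤) :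
    (Group.rank G : ℕ∞) ≤ S.encard := by
  rcases S.finite_or_infinite with hfin | hinf
  · lift S to Finset G using hfin
    rw [encard_coe_eq_coe_finsetCard]
    exact_mod_cast Group.rank_le hS
  · exact hinf.encard_eq ▸ le_top

theorem stmt_7_general (H : Subgroup G) :
    (∃ T : Set G, IsLeftTransversal H T ∧ closure T = ⊤) ↔
      (Group.rank G : ℕ∞) ≤ ENat.card (G ⧸ H) := by
  constructor
  · rintro ⟨T, hT, hgen⟩
    exact hT.encard_eq ▸ rank_le_encard_of_closure_eq_top hgen
  · intro hle
    obtain ⟨S, hcard, hgen⟩ := Group.rank_spec G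
    rw [← hcard, ← encard_coe_eq_coe_finsetCard] at hle
    obtain ⟨S', hgen', hinj⟩ :=
      exists_closure_eq_top_injOn_smul hgen S.finite_toSet hle ((1 : G) : G ⧸ H)
    simp only [MulAction.Quotient.smul_coe, smul_eq_mul, mul_one] at hinj
    obtain ⟨T, hST, hT⟩ := exists_isLeftTransversal_superset_s7 hinj
    exact ⟨T, hT, top_le_iff.1 (hgen' ▸ closure_mono hST)⟩

end Group

/-- For a finitely generated group `G` and a finite index subgroup `H`, there is a left
transversal for `H` generating `G` if and only if `[G:H] ≥ d(G)`. -/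
theorem stmt_7 {G : Type*} [Group G] [Group.FG G] (H : Subgroup G) (hfin : H.index ≠ 0) :
    (∃ T : Set G, IsLeftTransversal H T ∧ Subgroup.closure T = ⊤) ↔
      Group.rank G ≤ H.index := by
  have : Finite (G ⧸ H) := Nat.finite_of_card_ne_zero hfin
  rw [stmt_7_general, ENat.card_eq_coe_natCard, Nat.cast_le, index]
end

section
/- Let G be a group with d(G) = n, and let H be a subgroup of finite index in G with [G:H] < n + 2^n. Then at least one of the following holds: (1) H contains at least one primitive element of G; (2) H is normal in G and G/H is isomorphic to C_2^m for some m ≤ n. -/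
/-- A primitive element of a group `G` of finite rank: an element belonging to some
generating set of `G` of size exactly `d(G)`. -/
def IsPrimitive (G : Type*) [Group G] [Group.FG G] (g : G) : Prop :=
  ∃ S : Finset G, g ∈ S ∧ S.card = Group.rank G ∧ Subgroup.closure (S : Set G) = ⊤

/-!
Let `S` be a generating set of minimal size and suppose that `H` contains no primitive element.
Multiplying `s ∈ S` on both sides by elements of `K = ⟨T⟩`, where `T ⊆ S \ {s}`, gives a primitive
element, so `K s K` misses `H`. Hence the orbit of the coset `H` under `K` is disjoint from its
translate by `s`, and adjoining `s` to `T` at least doubles the number `[K : H ∩ K]` of cosets met.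
Starting from `T = ∅`, this gives `[G : H] ≥ 2 ^ n`. Starting from `T = {g}` with `g ^ 2 ∉ H`, where
`⟨g⟩` already meets three cosets, it gives `[G : H] ≥ 3 * 2 ^ (n - 1)`.

Below the latter bound, `H` therefore contains the squares of all primitive elements, and so does
its normal core `N`. As the elements of `S` and their pairwise products are primitive, `G ⧸ N` is
abelian of exponent dividing two, so `[G : N] ≤ 2 ^ n ≤ [G : H]`, whence `N = H`.
-/

section ElementaryAbelian

theorem commute_of_sq_eq_one {Q : Type*} [Group Q] {a b : Q} (ha : a ^ 2 = 1) (hb : b ^ 2 = 1)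
    (hab : (a * b) ^ 2 = 1) : Commute a b := by
  rw [sq, mul_eq_one_iff_eq_inv] at ha hb hab
  rw [commute_iff_eq, hab, mul_inv_rev, ← ha, ← hb]

theorem pow_eq_one_of_closure_eq_top {Q : Type*} [Group Q] {S : Set Q} {k : ℕ}
    (hS : Subgroup.closure S = ⊤) (hcomm : ∀ x ∈ S, ∀ y ∈ S, Commute x y)
    (hpow : ∀ x ∈ S, x ^ k = 1) (q : Q) : q ^ k = 1 := by
  have hq : ∀ q, q ∈ Subgroup.closure S := fun q ↦ hS ▸ Subgroup.mem_top q
  have := Subgroup.isMulCommutative_closure hcomm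
  induction hq q using Subgroup.closure_induction with
  | mem x hx => exact hpow x hx
  | one => exact one_pow k
  | mul x y _ _ hx hy =>
    have hxy : Commute x y := setLike_mul_comm (hq x) (hq y)
    rw [hxy.mul_pow, hx, hy, one_mul]
  | inv x _ hx => rw [inv_pow, hx, inv_one]

theorem nonempty_addEquiv_of_card_eq_prime_pow {A : Type*} [AddCommGroup A] {p n : ℕ}
    [Fact p.Prime] (hsmul : ∀ a : A, p • a = 0) (hcard : Nat.card A = p ^ n) :
    Nonempty (A ≃+ (Fin n → ZMod p)) := by
  have : Finite A := Nat.finite_of_card_ne_zero (hcard ▸ pow_ne_zero n (NeZero.ne p))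
  have : Module (ZMod p) A := AddCommGroup.zmodModule hsmul
  have hdim : Module.finrank (ZMod p) A = n := by
    have h := Module.natCard_eq_pow_finrank (K := ZMod p) (V := A)
    rw [hcard, Nat.card_zmod] at h
    exact (Nat.pow_right_injective (Fact.out : p.Prime).two_le h).symm
  have e : A ≃ₗ[ZMod p] (Fin n → ZMod p) :=
    LinearEquiv.ofFinrankEq _ _ (by rw [hdim, Module.finrank_fin_fun])
  exact ⟨e.toAddEquiv⟩

end ElementaryAbelian

section RelIndex

variable {G : Type*} [Group G] (H : Subgroup G)

instance isFiniteRelIndex_of_finiteIndex [H.FiniteIndex] (K : Subgroup G) :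
    H.IsFiniteRelIndex K :=
  Subgroup.isFiniteRelIndex_iff_finiteIndex.mpr inferInstance

theorem relIndex_eq_ncard_orbit (K : Subgroup G) :
    H.relIndex K = (MulAction.orbit K ((1 : G) : G ⧸ H)).ncard := by
  have hstab : MulAction.stabilizer K ((1 : G) : G ⧸ H) = H.subgroupOf K := by
    ext k
    exact (SetLike.ext_iff.mp (MulAction.stabilizer_quotient H) (k : G) :)
  rw [Subgroup.relIndex, ← hstab, MulAction.index_stabilizer]

open scoped Pointwise in
theorem two_mul_relIndex_le_of_forall_notMem {K L : Subgroup G} [H.IsFiniteRelIndex L]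
    (hKL : K ≤ L) {s : G} (hs : s ∈ L) (hsH : ∀ a ∈ K, ∀ b ∈ K, a * s * b ∉ H) :
    2 * H.relIndex K ≤ H.relIndex L := by
  simp only [relIndex_eq_ncard_orbit]
  set orbK := MulAction.orbit K ((1 : G) : G ⧸ H)
  set orbL := MulAction.orbit L ((1 : G) : G ⧸ H)
  have hfin : orbL.Finite :=
    Set.finite_of_ncard_ne_zero (relIndex_eq_ncard_orbit H L ▸ Subgroup.relIndex_ne_zero)
  have hKsub : orbK ⊆ orbL := by
    rintro _ ⟨a, rfl⟩
    exact ⟨⟨a, hKL a.2⟩, rfl⟩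
  have hsKsub : s • orbK ⊆ orbL := by
    rintro _ ⟨_, ⟨a, rfl⟩, rfl⟩
    exact ⟨⟨s * a, mul_mem hs (hKL a.2)⟩, mul_smul s (a : G) ((1 : G) : G ⧸ H)⟩
  have hdisj : Disjoint orbK (s • orbK) := by
    rw [Set.disjoint_left]
    rintro _ ⟨a, rfl⟩ ⟨_, ⟨b, rfl⟩, hab⟩
    have hba : ((a * 1 : G) : G ⧸ H) = ((s * (b * 1) : G) : G ⧸ H) := hab.symm
    rw [mul_one, mul_one, QuotientGroup.eq, ← mul_assoc] at hba
    exact hsH _ (inv_mem a.2) _ b.2 hba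
  calc 2 * orbK.ncard = (orbK ∪ s • orbK).ncard := by
        rw [Set.ncard_union_eq hdisj (hfin.subset hKsub) (hfin.subset hsKsub),
          Set.ncard_smul_set, two_mul]
    _ ≤ orbL.ncard := Set.ncard_le_ncard (Set.union_subset hKsub hsKsub) hfin

theorem sq_mem_of_relIndex_zpowers_le_two {g : G} [H.IsFiniteRelIndex (Subgroup.zpowers g)]
    (h : H.relIndex (Subgroup.zpowers g) ≤ 2) : g ^ 2 ∈ H := by
  have hpos : H.relIndex (Subgroup.zpowers g) ≠ 0 := Subgroup.relIndex_ne_zero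
  obtain hone | htwo : H.relIndex (.zpowers g) = 1 ∨ H.relIndex (.zpowers g) = 2 := by lia
  · exact pow_mem (Subgroup.relIndex_eq_one.mp hone (Subgroup.mem_zpowers g)) 2
  · exact Subgroup.sq_mem_of_index_two htwo ⟨g, Subgroup.mem_zpowers g⟩

end RelIndex

section Primitive

variable {G : Type*} [Group G] [Group.FG G]

theorem isPrimitive_of_mem {S : Finset G} {g : G} (hg : g ∈ S) (hcard : S.card ≤ Group.rank G)
    (hS : Subgroup.closure (S : Set G) = ⊤) : IsPrimitive G g :=
  ⟨S, hg, hcard.antisymm (Group.rank_le hS), hS⟩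

theorem IsPrimitive.map {G' : Type*} [Group G'] [Group.FG G'] {g : G} (hg : IsPrimitive G g)
    (e : G ≃* G') : IsPrimitive G' (e g) := by
  classical
  obtain ⟨S, hgS, hcard, hS⟩ := hg
  refine isPrimitive_of_mem (Finset.mem_image_of_mem e hgS) ?_ ?_
  · rw [← Group.rank_congr e, ← hcard]
    exact Finset.card_image_le
  · rw [Finset.coe_image, ← MulEquiv.coe_toMonoidHom, ← MonoidHom.map_closure, hS,
      Subgroup.map_top_of_surjective _ e.surjective]

theorem isPrimitive_mul_mul [DecidableEq G] {S : Finset G} (hcard : S.card = Group.rank G)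
    (hS : Subgroup.closure (S : Set G) = ⊤) {s a b : G} (hs : s ∈ S)
    (ha : a ∈ Subgroup.closure (S.erase s : Set G))
    (hb : b ∈ Subgroup.closure (S.erase s : Set G)) : IsPrimitive G (a * s * b) := by
  set S' : Finset G := insert (a * s * b) (S.erase s)
  have hle : Subgroup.closure (S.erase s : Set G) ≤ Subgroup.closure (S' : Set G) :=
    Subgroup.closure_mono (Finset.coe_subset.mpr (Finset.subset_insert _ _))
  have hmem : a * s * b ∈ Subgroup.closure (S' : Set G) :=
    Subgroup.subset_closure (Finset.mem_insert_self _ _)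
  have hs' : s ∈ Subgroup.closure (S' : Set G) := by
    rwa [Subgroup.mul_mem_cancel_right _ (hle hb), Subgroup.mul_mem_cancel_left _ (hle ha)] at hmem
  refine isPrimitive_of_mem (S := S') (Finset.mem_insert_self _ _) ?_ ?_
  · calc S'.card ≤ (S.erase s).card + 1 := Finset.card_insert_le _ _
      _ = Group.rank G := by rw [Finset.card_erase_add_one hs, hcard]
  · rw [eq_top_iff, ← hS, Subgroup.closure_le]
    intro t ht
    obtain rfl | hts := eq_or_ne t s
    · exact hs'
    · exact hle (Subgroup.subset_closure (Finset.mem_erase.mpr ⟨hts, ht⟩))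

end Primitive

section NoPrimitive

variable {G : Type*} [Group G] [Group.FG G] {H : Subgroup G} [H.FiniteIndex]

theorem two_pow_card_mul_relIndex_closure_le [DecidableEq G] (hH : ∀ g ∈ H, ¬ IsPrimitive G g)
    {S : Finset G} (hcard : S.card = Group.rank G) (hS : Subgroup.closure (S : Set G) = ⊤)
    {T R : Finset G} (hTS : T ⊆ S) (hRS : R ⊆ S) (hdisj : Disjoint R T) :
    2 ^ R.card * H.relIndex (Subgroup.closure (T : Set G)) ≤
      H.relIndex (Subgroup.closure (R ∪ T : Finset G)) := by
  induction R using Finset.induction_on with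
  | empty => simp
  | insert s R hsR ih =>
    obtain ⟨hsS, hRS⟩ := Finset.insert_subset_iff.mp hRS
    obtain ⟨hsT, hdisj⟩ := Finset.disjoint_insert_left.mp hdisj
    have herase : R ∪ T ⊆ S.erase s :=
      Finset.subset_erase.mpr ⟨Finset.union_subset hRS hTS, by simp [hsR, hsT]⟩
    have hle : Subgroup.closure (R ∪ T : Finset G) ≤ Subgroup.closure (S.erase s : Set G) :=
      Subgroup.closure_mono (Finset.coe_subset.mpr herase)
    calc 2 ^ (insert s R).card * H.relIndex (Subgroup.closure (T : Set G))
        = 2 * (2 ^ R.card * H.relIndex (Subgroup.closure (T : Set G))) := by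
          rw [Finset.card_insert_of_notMem hsR]; ring
      _ ≤ 2 * H.relIndex (Subgroup.closure (R ∪ T : Finset G)) :=
          Nat.mul_le_mul_left 2 (ih hRS hdisj)
      _ ≤ H.relIndex (Subgroup.closure (insert s R ∪ T : Finset G)) := by
          rw [Finset.insert_union]
          exact two_mul_relIndex_le_of_forall_notMem H
            (Subgroup.closure_mono (Finset.coe_subset.mpr (Finset.subset_insert _ _)))
            (Subgroup.subset_closure (Finset.mem_insert_self _ _))
            fun a ha b hb hab ↦ hH _ hab (isPrimitive_mul_mul hcard hS hsS (hle ha) (hle hb))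

theorem two_pow_rank_le_index (hH : ∀ g ∈ H, ¬ IsPrimitive G g) :
    2 ^ Group.rank G ≤ H.index := by
  classical
  obtain ⟨S, hcard, hS⟩ := Group.rank_spec G
  have h := two_pow_card_mul_relIndex_closure_le hH hcard hS (Finset.empty_subset S)
    subset_rfl (Finset.disjoint_empty_right S)
  simpa [hcard, hS] using h

theorem IsPrimitive.sq_mem {g : G} (hg : IsPrimitive G g) (hH : ∀ g ∈ H, ¬ IsPrimitive G g)
    (hidx : 2 * H.index < 3 * 2 ^ Group.rank G) : g ^ 2 ∈ H := by
  classical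
  obtain ⟨S, hgS, hcard, hS⟩ := hg
  have h := two_pow_card_mul_relIndex_closure_le hH hcard hS (Finset.singleton_subset_iff.mpr hgS)
    (Finset.erase_subset g S) (by simp)
  rw [Finset.union_comm, ← Finset.insert_eq, Finset.insert_erase hgS, hS,
    Subgroup.relIndex_top_right, Finset.coe_singleton, ← Subgroup.zpowers_eq_closure] at h
  refine sq_mem_of_relIndex_zpowers_le_two H (Nat.le_of_lt_succ ?_)
  refine Nat.lt_of_mul_lt_mul_left (a := 2 ^ S.card) ?_
  calc 2 ^ S.card * H.relIndex (Subgroup.zpowers g)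
      = 2 * (2 ^ (S.erase g).card * H.relIndex (Subgroup.zpowers g)) := by
        rw [← Finset.card_erase_add_one hgS]; ring
    _ ≤ 2 * H.index := Nat.mul_le_mul_left 2 h
    _ < 2 ^ S.card * 3 := by rwa [hcard, mul_comm _ 3]

theorem IsPrimitive.sq_mem_normalCore {g : G} (hg : IsPrimitive G g)
    (hH : ∀ g ∈ H, ¬ IsPrimitive G g) (hidx : 2 * H.index < 3 * 2 ^ Group.rank G) :
    g ^ 2 ∈ H.normalCore := fun c ↦ by
  rw [← conj_pow]
  exact (hg.map (MulAut.conj c)).sq_mem hH hidx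

theorem sq_eq_one_quotient_normalCore (hH : ∀ g ∈ H, ¬ IsPrimitive G g)
    (hidx : 2 * H.index < 3 * 2 ^ Group.rank G) (q : G ⧸ H.normalCore) : q ^ 2 = 1 := by
  classical
  have hsq : ∀ g : G, IsPrimitive G g → (g : G ⧸ H.normalCore) ^ 2 = 1 := fun g hg ↦
    (QuotientGroup.eq_one_iff (g ^ 2)).mpr (hg.sq_mem_normalCore hH hidx)
  obtain ⟨S, hcard, hS⟩ := Group.rank_spec G
  have hSsq : ∀ s ∈ S, (s : G ⧸ H.normalCore) ^ 2 = 1 := fun s hs ↦ hsq s ⟨S, hs, hcard, hS⟩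
  refine pow_eq_one_of_closure_eq_top (S := QuotientGroup.mk' H.normalCore '' S) ?_ ?_ ?_ q
  · rw [← MonoidHom.map_closure, hS,
      Subgroup.map_top_of_surjective _ (QuotientGroup.mk'_surjective _)]
  · rintro _ ⟨s, hs, rfl⟩ _ ⟨t, ht, rfl⟩
    obtain rfl | hst := eq_or_ne s t
    · exact Commute.refl _
    have hprim : IsPrimitive G (1 * s * t) := isPrimitive_mul_mul hcard hS hs (one_mem _)
      (Subgroup.subset_closure (Finset.mem_erase.mpr ⟨hst.symm, ht⟩))
    rw [one_mul] at hprim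
    exact commute_of_sq_eq_one (hSsq s hs) (hSsq t ht) (hsq _ hprim)
  · rintro _ ⟨s, hs, rfl⟩
    exact hSsq s hs

end NoPrimitive

open scoped IsMulCommutative in
theorem stmt_15_general {G : Type*} [Group G] [Group.FG G] (H : Subgroup G) [H.FiniteIndex]
    (hidx : 2 * H.index < 3 * 2 ^ Group.rank G) :
    (∃ g ∈ H, IsPrimitive G g) ∨
      ∃ φ : G →* Multiplicative (Fin (Group.rank G) → ZMod 2),
        Function.Surjective φ ∧ φ.ker = H := by
  refine or_iff_not_imp_left.mpr fun hnot ↦ ?_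
  have hH : ∀ g ∈ H, ¬ IsPrimitive G g := fun g hg hprim ↦ hnot ⟨g, hg, hprim⟩
  have hsq := sq_eq_one_quotient_normalCore hH hidx
  have : IsMulCommutative (G ⧸ H.normalCore) :=
    ⟨⟨Commute.of_orderOf_dvd_two fun q ↦ orderOf_dvd_of_pow_eq_one (hsq q)⟩⟩
  have hcore_le : H.normalCore.index ≤ 2 ^ Group.rank G :=
    (Nat.le_of_dvd (by positivity) (card_dvd_exponent_pow_rank' _ hsq)).trans
      (Nat.pow_le_pow_right two_pos
        (Group.rank_le_of_surjective _ (QuotientGroup.mk'_surjective H.normalCore)))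
  have hle_index := two_pow_rank_le_index hH
  have hcore : H.normalCore = H := by
    by_contra hne
    exact (Subgroup.index_strictAnti (H.normalCore_le.lt_of_ne hne)).not_ge
      (hcore_le.trans hle_index)
  have hcard : Nat.card (G ⧸ H.normalCore) = 2 ^ Group.rank G :=
    hcore_le.antisymm (hle_index.trans_eq (congrArg Subgroup.index hcore.symm))
  obtain ⟨e⟩ := nonempty_addEquiv_of_card_eq_prime_pow (A := Additive (G ⧸ H.normalCore)) hsq hcard
  refine ⟨(AddEquiv.toMultiplicativeRight e : _ →* _).comp (QuotientGroup.mk' H.normalCore),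
    e.surjective.comp (QuotientGroup.mk'_surjective _), ?_⟩
  rw [MonoidHom.ker_mulEquiv_comp, QuotientGroup.ker_mk', hcore]

theorem two_mul_add_two_pow_le (n : ℕ) : 2 * (n + 2 ^ n) ≤ 3 * 2 ^ n := by
  cases n with
  | zero => norm_num
  | succ k =>
    have hk : k < 2 ^ k := Nat.lt_two_pow_self
    rw [pow_succ]
    lia

/-- If `d(G) = n` and `H` is a subgroup of finite index with `[G:H] < n + 2^n`, then
either `H` contains a primitive element of `G`, or `H` is normal in `G` with
`G ⧸ H ≅ C₂^m` for some `m ≤ n` (expressed via a surjective homomorphism onto `C₂^m` with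
kernel `H`). -/
theorem stmt_15 {G : Type*} [Group G] [Group.FG G] (n : ℕ) (hrank : Group.rank G = n)
    (H : Subgroup G) (hfin : H.index ≠ 0) (hidx : H.index < n + 2 ^ n) :
    (∃ g ∈ H, IsPrimitive G g) ∨
      (H.Normal ∧ ∃ m ≤ n, ∃ φ : G →* Multiplicative (Fin m → ZMod 2),
        Function.Surjective φ ∧ φ.ker = H) := by
  subst hrank
  have : H.FiniteIndex := ⟨hfin⟩
  have hidx' := two_mul_add_two_pow_le (Group.rank G)
  exact (stmt_15_general H (by lia)).imp_right fun ⟨φ, hφ, hker⟩ ↦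
    ⟨hker ▸ φ.normal_ker, _, le_rfl, φ, hφ, hker⟩
end
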